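/- Let r be a graphon with r₋ ≤ r(x,y) ≤ r₊ for all (x,y) and some 0 < r₋ ≤ r₊ < 1, and let (r_N) be block graphons with r_N(x,y) → r(x,y) for every (x,y) ∈ [0,1]² and ‖r_N − r‖_∞ → 0. Fix x ∈ [0,1], and for each N let i_x ∈ {1,…,N} be the index with x ∈ [(i_x−1)/N, i_x/N), and let d_{i_x} be the degree of vertex i_x in the inhomogeneous Erdős–Rényi random graph G_N. Then for every β ∈ (d_r(x), 1), lim_{N→∞} N^{-1} log P_N( d_{i_x}/N ≥ β ) = − J_r(x,β), where d_r(x) = ∫₀¹ r(x,y) dy. -/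

import Mathlib

/-!
The degree of the vertex `i` containing `x` is a sum of independent Bernoulli variables, so its
moment generating function is `∏_{j ≠ i} (p_ij e^θ + 1 - p_ij)` (`errg_degree_mgf`). As the
block graphon is constant on blocks, the normalised logarithm of this product equals
`Lam (r_N) x θ` up to one diagonal term of order `1/N` (`abs_log_mgf_sub_Lam_le`), and dominated
convergence gives `Lam (r_N) x θ → Lam r x θ` (`tendsto_Lam`).

The limit then follows from a Gärtner–Ellis argument (`gartner_ellis_upper_tail`). The upper bound
is the Chernoff bound at `θ₀`. For the lower bound one tilts by some `θ` slightly above `θ₀`; the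
tilted mean `m θ` lies strictly inside a window just above `β`, and both ways of leaving the window
are exponentially unlikely because the tilted moment generating function is a ratio of the original
ones. In place of the derivative of `Λ = Lam r x` it uses the bounds
`m(θ) s ≤ Λ(θ + s) - Λ(θ) ≤ m(θ) (e^s - 1)`, where `m = meanTilt r x`; they come from Jensen's
inequality for `exp` and from `log z ≤ z - 1`.

Finally `m` is continuous and strictly increasing, equals the degree at `0` and tends to `1`, so
`m θ₀ = β` has a solution `θ₀ ≥ 0` (`exists_meanTilt_eq`), and the supremum in `Jfun r x β` is
attained there (`Jfun_eq`).
-/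

open MeasureTheory Filter Set
open scoped BigOperators

noncomputable section

/-- The unit interval `[0,1] ⊆ ℝ`. -/
def UI : Set ℝ := Set.Icc 0 1

/-- A graphon: a symmetric measurable function with values in `[0,1]`. -/
def IsGraphon (f : ℝ → ℝ → ℝ) : Prop :=
  (∀ x y, f x y = f y x) ∧ Measurable (Function.uncurry f) ∧
    ∀ x y, f x y ∈ Set.Icc (0 : ℝ) 1

/-- Membership in `L²([0,1])`. -/
def MemL2 (u : ℝ → ℝ) : Prop :=
  Measurable u ∧ IntegrableOn (fun x => u x ^ 2) UI

/-- The `L²([0,1])`-norm. -/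
def l2 (u : ℝ → ℝ) : ℝ := (∫ x in UI, u x ^ 2) ^ (1/2 : ℝ)

/-- The Laplacian graphon operator applied to `u`. -/
def lapApply (f : ℝ → ℝ → ℝ) (u : ℝ → ℝ) (x : ℝ) : ℝ :=
  ∫ y in UI, f x y * (u x - u y)

/-- The operator norm of the Laplacian graphon operator. -/
def lapNorm (f : ℝ → ℝ → ℝ) : ℝ :=
  sSup {c | ∃ u : ℝ → ℝ, MemL2 u ∧ l2 u = 1 ∧ c = l2 (lapApply f u)}

/-- The degree function of a graphon. -/
def degFun (f : ℝ → ℝ → ℝ) (x : ℝ) : ℝ := ∫ y in UI, f x y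

/-- The essential supremum of the degree function. -/
def degSup (f : ℝ → ℝ → ℝ) : ℝ := essSup (degFun f) (volume.restrict UI)

/-- Bernoulli relative entropy `R(a|b)`. -/
def relEnt (a b : ℝ) : ℝ :=
  a * Real.log (a / b) + (1 - a) * Real.log ((1 - a) / (1 - b))

/-- The relative entropy functional `I_r(h)`. -/
def Ir (r h : ℝ → ℝ → ℝ) : ℝ :=
  ∫ p in UI ×ˢ UI, relEnt (h p.1 p.2) (r p.1 p.2)

/-- The downward rate function `ψ_r`. -/
def psiLow (r : ℝ → ℝ → ℝ) (β : ℝ) : ℝ :=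
  sInf {c | ∃ h, IsGraphon h ∧ lapNorm h ≤ β ∧ c = Ir r h}

/-- A Lebesgue-measure-preserving bijection of `[0,1]`. -/
structure MPB where
  toFun : ℝ → ℝ
  bijOn : Set.BijOn toFun UI UI
  measurePreserving :
    MeasurePreserving toFun (volume.restrict UI) (volume.restrict UI)

/-- The cut distance `d_□`. -/
def cutDist (f g : ℝ → ℝ → ℝ) : ℝ :=
  sSup {c | ∃ S T : Set ℝ, MeasurableSet S ∧ MeasurableSet T ∧ S ⊆ UI ∧ T ⊆ UI ∧
    c = |∫ x in S, ∫ y in T, (f x y - g x y)|}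

/-- The cut metric `δ_□`. -/
def cutMetric (f g : ℝ → ℝ → ℝ) : ℝ :=
  sInf {c | ∃ φ : MPB, c = cutDist f (fun x y => g (φ.toFun x) (φ.toFun y))}

/-- The rate function `J_r` (infimum of `I_r` over relabelings). -/
def Jrate (r h : ℝ → ℝ → ℝ) : ℝ :=
  sInf {c | ∃ φ : MPB, c = Ir r (fun x y => h (φ.toFun x) (φ.toFun y))}

/-- Open sets of graphons in the topology induced by the cut metric. -/
def CutOpen (O : Set (ℝ → ℝ → ℝ)) : Prop :=
  ∀ f ∈ O, ∃ ε > 0, ∀ g, IsGraphon g → cutMetric f g < ε → g ∈ O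

/-- Closed sets of graphons in the topology induced by the cut metric. -/
def CutClosed (C : Set (ℝ → ℝ → ℝ)) : Prop :=
  ∀ f, IsGraphon f → f ∉ C → ∃ ε > 0, ∀ g, IsGraphon g → cutMetric f g < ε → g ∉ C

/-- Adjacency matrices of simple graphs on `N` vertices. -/
abbrev AdjMat (N : ℕ) :=
  {A : Fin N → Fin N → Bool // (∀ i j, A i j = A j i) ∧ ∀ i, A i i = false}

/-- Probability weight of a configuration of the inhomogeneous ERRG. -/
def errgWeight (N : ℕ) (p : Fin N → Fin N → ℝ) (A : AdjMat N) : ℝ :=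
  ∏ i : Fin N, ∏ j : Fin N,
    if i < j then (if A.1 i j then p i j else 1 - p i j) else 1

open Classical in
/-- The law of the inhomogeneous ERRG with edge probabilities `p`. -/
def errgProb (N : ℕ) (p : Fin N → Fin N → ℝ) (E : Set (AdjMat N)) : ℝ :=
  ∑ A : AdjMat N, if A ∈ E then errgWeight N p A else 0

/-- Degree of vertex `i`. -/
def degRG {N : ℕ} (A : AdjMat N) (i : Fin N) : ℝ :=
  ∑ j : Fin N, if A.1 i j then (1 : ℝ) else 0

/-- The Laplacian matrix `L = D - A`. -/
def lapMat {N : ℕ} (A : AdjMat N) : Matrix (Fin N) (Fin N) ℝ :=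
  fun i j => (if i = j then degRG A i else 0) - (if A.1 i j then 1 else 0)

/-- The largest eigenvalue of a matrix. -/
def lambdaMax {N : ℕ} (M : Matrix (Fin N) (Fin N) ℝ) : ℝ :=
  sSup {μ | ∃ v : Fin N → ℝ, v ≠ 0 ∧ M.mulVec v = μ • v}

/-- The spectral norm (largest absolute value of an eigenvalue) of a matrix. -/
def specNorm {N : ℕ} (M : Matrix (Fin N) (Fin N) ℝ) : ℝ :=
  sSup {c | ∃ μ : ℝ, (∃ v : Fin N → ℝ, v ≠ 0 ∧ M.mulVec v = μ • v) ∧ c = |μ|}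

/-- The `i`-th block of `[0,1]` divided into `N` blocks. -/
def blk (N : ℕ) (i : Fin N) : Set ℝ :=
  Set.Ico (((i : ℕ) : ℝ) / N) ((((i : ℕ) : ℝ) + 1) / N)

open Classical in
/-- The empirical graphon of a graph on `N` vertices. -/
def empGraphon (N : ℕ) (A : AdjMat N) (x y : ℝ) : ℝ :=
  if ∃ i j : Fin N, A.1 i j = true ∧ x ∈ blk N i ∧ y ∈ blk N j then 1 else 0

/-- A function that is constant on the `N × N` blocks. -/
def IsBlockGraphon (N : ℕ) (f : ℝ → ℝ → ℝ) : Prop :=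
  ∀ i j : Fin N, ∀ x₁ ∈ blk N i, ∀ x₂ ∈ blk N i, ∀ y₁ ∈ blk N j, ∀ y₂ ∈ blk N j,
    f x₁ y₁ = f x₂ y₂

/-- Edge probabilities induced by a block graphon. -/
def pOf (N : ℕ) (f : ℝ → ℝ → ℝ) (i j : Fin N) : ℝ :=
  f (((i : ℕ) : ℝ) / N) (((j : ℕ) : ℝ) / N)

/-- The cumulant generating function `Λ_r(x,θ)`. -/
def Lam (r : ℝ → ℝ → ℝ) (x θ : ℝ) : ℝ :=
  ∫ y in UI, Real.log (r x y * Real.exp θ + 1 - r x y)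

/-- The Legendre transform `J_r(x,β)`. -/
def Jfun (r : ℝ → ℝ → ℝ) (x β : ℝ) : ℝ :=
  ⨆ θ : ℝ, (θ * β - Lam r x θ)

/-- The upward rate function `ψ̂_r`. -/
def psiHat (r : ℝ → ℝ → ℝ) (β : ℝ) : ℝ :=
  ⨅ x : UI, Jfun r (x : ℝ) β

/-- The variance function `v_r`. -/
def vr (r : ℝ → ℝ → ℝ) (x : ℝ) : ℝ := ∫ y in UI, r x y * (1 - r x y)

/-- The tilted kernel `r̂` (Cramér transform with parameter `θ`). -/
def tilt (r : ℝ → ℝ → ℝ) (θ x y : ℝ) : ℝ :=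
  Real.exp θ * r x y / (Real.exp θ * r x y + 1 - r x y)

/-- The tilted mean degree. -/
def degMoment (r : ℝ → ℝ → ℝ) (x θ : ℝ) : ℝ := ∫ y in UI, tilt r θ x y

/-- Extended-real-valued logarithm with `log x = ⊥` for `x ≤ 0`. -/
def elog (x : ℝ) : EReal := if x ≤ 0 then ⊥ else ((Real.log x : ℝ) : EReal)

/-- Standing assumptions on the reference graphon. -/
def GraphonAssump (r : ℝ → ℝ → ℝ) : Prop :=
  IsGraphon r ∧ (∀ x ∈ UI, ∀ y ∈ UI, r x y ∈ Set.Ioo (0:ℝ) 1) ∧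
    IntegrableOn (fun p : ℝ × ℝ => Real.log (r p.1 p.2)) (UI ×ˢ UI) ∧
    IntegrableOn (fun p : ℝ × ℝ => Real.log (1 - r p.1 p.2)) (UI ×ˢ UI)

/-- Standing convergence assumptions on the block graphons `r_N`. -/
def SeqAssump (r : ℝ → ℝ → ℝ) (rN : ℕ → ℝ → ℝ → ℝ) : Prop :=
  (∀ N, IsGraphon (rN N)) ∧ (∀ N, IsBlockGraphon N (rN N)) ∧
  (∀ N, ∀ x ∈ UI, ∀ y ∈ UI, rN N x y ∈ Set.Ioo (0:ℝ) 1) ∧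
  (∀ᵐ p ∂(volume.restrict (UI ×ˢ UI)),
    Tendsto (fun N => rN N (p : ℝ × ℝ).1 p.2) atTop (nhds (r p.1 p.2))) ∧
  Tendsto (fun N => ∫ p in UI ×ˢ UI, |rN N p.1 p.2 - r p.1 p.2|) atTop (nhds 0) ∧
  Tendsto (fun N => ∫ p in UI ×ˢ UI,
    |Real.log (rN N p.1 p.2) - Real.log (r p.1 p.2)|) atTop (nhds 0) ∧
  Tendsto (fun N => ∫ p in UI ×ˢ UI,
    |Real.log (1 - rN N p.1 p.2) - Real.log (1 - r p.1 p.2)|) atTop (nhds 0)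

/-- A graphon bounded between `rm` and `rp`, `0 < rm ≤ rp < 1`. -/
def BoundedGraphon (r : ℝ → ℝ → ℝ) (rm rp : ℝ) : Prop :=
  IsGraphon r ∧ 0 < rm ∧ rm ≤ rp ∧ rp < 1 ∧
    ∀ x ∈ UI, ∀ y ∈ UI, rm ≤ r x y ∧ r x y ≤ rp

/-- Sup-norm convergence on `[0,1]²`. -/
def SupConv (r : ℝ → ℝ → ℝ) (rN : ℕ → ℝ → ℝ → ℝ) : Prop :=
  ∀ ε > 0, ∃ N₀, ∀ N ≥ N₀, ∀ x ∈ UI, ∀ y ∈ UI, |rN N x y - r x y| ≤ ε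

/-- Pointwise convergence on `[0,1]²`. -/
def PtConv (r : ℝ → ℝ → ℝ) (rN : ℕ → ℝ → ℝ → ℝ) : Prop :=
  ∀ x ∈ UI, ∀ y ∈ UI, Tendsto (fun N => rN N x y) atTop (nhds (r x y))

/-- Non-negative definiteness of a kernel. -/
def NonnegDef (r : ℝ → ℝ → ℝ) : Prop :=
  ∀ u : ℝ → ℝ, MemL2 u → 0 ≤ ∫ p in UI ×ˢ UI, r p.1 p.2 * u p.1 * u p.2

/-- `μ` is an eigenvalue of the Laplacian operator `L_f` on `L²([0,1])`. -/
def lapEigen (f : ℝ → ℝ → ℝ) (μ : ℝ) : Prop :=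
  ∃ u : ℝ → ℝ, MemL2 u ∧ (∫ x in UI, u x ^ 2) ≠ 0 ∧
    ∀ᵐ x ∂(volume.restrict UI), lapApply f u x = μ * u x

/-! ### Large deviations of finite weighted sums -/

/-- Since `exp u = 1 + u + o(u)`, for small `s > 0` the Chernoff exponents at the levels
`m + d` (tilt `s`) and `m - d` (tilt `-s`) are strictly negative. -/
theorem exists_tilt_step (m d : ℝ) (hd : 0 < d) :
    ∃ s : ℝ, 0 < s ∧ m * (Real.exp s - 1) < s * (m + d) ∧
      m * (Real.exp (-s) - 1) < -s * (m - d) := by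
  set s : ℝ := min 1 (d / (2 * (|m| + 1))) with hs
  have hm := abs_nonneg m
  have hs0 : 0 < s := lt_min one_pos (by positivity)
  have hs1 : s ≤ 1 := min_le_left _ _
  have hsd : |m| * s < d := by
    have h : s ≤ d / (2 * (|m| + 1)) := min_le_right _ _
    rw [le_div_iff₀ (by positivity)] at h
    nlinarith
  have key : ∀ u : ℝ, |u| = s → m * (Real.exp u - 1) < m * u + s * d := by
    intro u hu
    have h1 := Real.abs_exp_sub_one_sub_id_le (x := u) (by rw [hu]; exact hs1)
    have h2 : m * (Real.exp u - 1 - u) ≤ |m| * s ^ 2 := by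
      calc m * (Real.exp u - 1 - u) ≤ |m * (Real.exp u - 1 - u)| := le_abs_self _
        _ = |m| * |Real.exp u - 1 - u| := abs_mul _ _
        _ ≤ |m| * u ^ 2 := by gcongr
        _ = |m| * s ^ 2 := by rw [← hu, sq_abs]
    nlinarith
  refine ⟨s, hs0, ?_, ?_⟩
  · have := key s (abs_of_pos hs0); linarith
  · have := key (-s) (by rw [abs_neg, abs_of_pos hs0]); linarith

theorem chernoff_upper {Ω : Type*} [Fintype Ω] (w X : Ω → ℝ) (hw : ∀ A, 0 ≤ w A)
    (c θ : ℝ) (hθ : 0 ≤ θ) :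
    (∑ A, if c ≤ X A then w A else 0) ≤
      Real.exp (-(θ * c)) * ∑ A, w A * Real.exp (θ * X A) := by
  rw [Finset.mul_sum]
  refine Finset.sum_le_sum fun A _ => ?_
  split_ifs with h
  · have h1 : 1 ≤ Real.exp (-(θ * c)) * Real.exp (θ * X A) := by
      rw [← Real.exp_add]; apply Real.one_le_exp; nlinarith
    nlinarith [hw A]
  · have := hw A; positivity

/-- Lower bound by exponential tilting: under the `θ`-tilted weight, the events `X < c` and `c' < X`
are removed by Chernoff bounds with parameters `s` and `t`, and on the remaining window
`[c, c']` undoing the tilt multiplies the weight by at least `exp (-θ c')`. -/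
theorem tilted_lower {Ω : Type*} [Fintype Ω] (w X : Ω → ℝ) (hw : ∀ A, 0 ≤ w A)
    (c c' θ s t : ℝ) (hθ : 0 ≤ θ) (hs : 0 ≤ s) (ht : 0 ≤ t) :
    Real.exp (-(θ * c')) * ((∑ A, w A * Real.exp (θ * X A))
        - Real.exp (s * c) * (∑ A, w A * Real.exp ((θ - s) * X A))
        - Real.exp (-(t * c')) * ∑ A, w A * Real.exp ((θ + t) * X A)) ≤
      ∑ A, if c ≤ X A then w A else 0 := by
  rw [Finset.mul_sum, Finset.mul_sum, ← Finset.sum_sub_distrib, ← Finset.sum_sub_distrib,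
    Finset.mul_sum]
  refine Finset.sum_le_sum fun A _ => ?_
  have e1 : Real.exp (s * c) * (w A * Real.exp ((θ - s) * X A)) =
      w A * (Real.exp (θ * X A) * Real.exp (s * (c - X A))) := by
    rw [← Real.exp_add, mul_left_comm, ← Real.exp_add]; ring_nf
  have e2 : Real.exp (-(t * c')) * (w A * Real.exp ((θ + t) * X A)) =
      w A * (Real.exp (θ * X A) * Real.exp (t * (X A - c'))) := by
    rw [← Real.exp_add, mul_left_comm, ← Real.exp_add]; ring_nf
  rw [e1, e2]
  have hE := Real.exp_pos (θ * X A)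
  have hp1 := Real.exp_pos (s * (c - X A))
  have hp2 := Real.exp_pos (t * (X A - c'))
  have e3 : ∀ E u v : ℝ, w A * E - w A * (E * u) - w A * (E * v) = w A * E * (1 - u - v) := by
    intros; ring
  rw [e3]
  have hnn : 0 ≤ Real.exp (-(θ * c')) * (w A * Real.exp (θ * X A)) := by
    have := hw A; positivity
  rw [← mul_assoc]
  split_ifs with h
  · rcases le_or_gt (X A) c' with h' | h'
    · have h1 : Real.exp (-(θ * c')) * Real.exp (θ * X A) ≤ 1 := by
        rw [← Real.exp_add]; apply Real.exp_le_one_iff.2; nlinarith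
      have h2 : Real.exp (-(θ * c')) * (w A * Real.exp (θ * X A)) ≤ w A := by
        nlinarith [hw A]
      nlinarith
    · have : 1 ≤ Real.exp (t * (X A - c')) := Real.one_le_exp (by nlinarith)
      nlinarith [hw A]
  · have : 1 ≤ Real.exp (s * (c - X A)) := Real.one_le_exp (by push Not at h; nlinarith)
    nlinarith

/-- A one-sided Gärtner–Ellis theorem for finite weighted sums. The function `m` plays the role
of `Λ'`; differentiability of `Λ` enters only through the two-sided bound on its increments. -/
theorem gartner_ellis_upper_tail {Ω : ℕ → Type*} [∀ n, Fintype (Ω n)] (w X : ∀ n, Ω n → ℝ)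
    (hw : ∀ n A, 0 ≤ w n A) (a : ℕ → ℝ) (ha0 : ∀ n, 0 < a n) (ha : Tendsto a atTop atTop)
    (Λ m : ℝ → ℝ) (hM : ∀ n θ, 0 < ∑ A, w n A * Real.exp (θ * X n A))
    (hΛ : ∀ θ, Tendsto (fun n => (a n)⁻¹ * Real.log (∑ A, w n A * Real.exp (θ * X n A)))
      atTop (nhds (Λ θ)))
    (hub : ∀ θ s, Λ (θ + s) - Λ θ ≤ m θ * (Real.exp s - 1))
    (hlb : ∀ θ s, m θ * s ≤ Λ (θ + s) - Λ θ)
    (hm : Continuous m) (hmono : StrictMono m) (θ₀ : ℝ) (hθ₀ : 0 ≤ θ₀) :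
    Tendsto (fun n => (a n)⁻¹ * Real.log (∑ A, if m θ₀ * a n ≤ X n A then w n A else 0))
      atTop (nhds (Λ θ₀ - θ₀ * m θ₀)) := by
  set β := m θ₀ with hβ
  set L : ℕ → ℝ → ℝ :=
    fun n θ => (a n)⁻¹ * Real.log (∑ A, w n A * Real.exp (θ * X n A)) with hL
  have hML : ∀ n θ, ∑ A, w n A * Real.exp (θ * X n A) = Real.exp (a n * L n θ) := by
    intro n θ
    rw [hL]
    simp only
    rw [mul_inv_cancel_left₀ (ha0 n).ne', Real.exp_log (hM n θ)]
  have lower : ∀ η > 0, ∀ᶠ n in atTop,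
      0 < (∑ A, if β * a n ≤ X n A then w n A else 0) ∧ Λ θ₀ - θ₀ * β - η <
        (a n)⁻¹ * Real.log (∑ A, if β * a n ≤ X n A then w n A else 0) := by
    intro η hη
    -- The window above `β` is `[β, m θ + (θ - θ₀)]`; its cost vanishes as `θ` decreases to `θ₀`.
    obtain ⟨θ, hθη, hθ⟩ : ∃ θ, θ * (m θ + (θ - θ₀) - β) < η / 2 ∧ θ₀ < θ := by
      have hc : Continuous fun θ => θ * (m θ + (θ - θ₀) - β) := by fun_prop
      have h1 : ∀ᶠ θ in nhdsWithin θ₀ (Set.Ioi θ₀), θ * (m θ + (θ - θ₀) - β) < η / 2 := by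
        apply (hc.tendsto θ₀).mono_left nhdsWithin_le_nhds |>.eventually_lt_const
        simp [hβ, hη]
      exact (h1.and self_mem_nhdsWithin).exists
    have hmθ : β < m θ := hmono hθ
    obtain ⟨s, hs, -, hs2⟩ := exists_tilt_step (m θ) (m θ - β) (by linarith)
    obtain ⟨t, ht, ht1, -⟩ := exists_tilt_step (m θ) (θ - θ₀) (by linarith)
    set β' := m θ + (θ - θ₀) with hβ'
    have c1 : s * β + Λ (θ - s) - Λ θ < 0 := by
      have := hub θ (-s); rw [← sub_eq_add_neg] at this; linarith
    have c2 : -(t * β') + Λ (θ + t) - Λ θ < 0 := by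
      have := hub θ t; linarith
    have decay : ∀ f : ℕ → ℝ, ∀ l < 0, Tendsto f atTop (nhds l) →
        ∀ᶠ n in atTop, Real.exp (a n * f n) < 1 / 4 := by
      intro f l hl hf
      have := Real.tendsto_exp_atBot.comp (ha.atTop_mul_neg hl hf)
      exact this.eventually_lt_const (by norm_num)
    have d1 := decay _ _ c1 (((hΛ (θ - s)).const_add (s * β)).sub (hΛ θ))
    have d2 := decay _ _ c2 (((hΛ (θ + t)).const_add (-(t * β'))).sub (hΛ θ))
    have d3 : ∀ᶠ n in atTop, Λ θ₀ - θ₀ * β - η <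
        L n θ - θ * β' + (a n)⁻¹ * Real.log (1 / 2) := by
      have hlim : Tendsto (fun n => L n θ - θ * β' + (a n)⁻¹ * Real.log (1 / 2)) atTop
          (nhds (Λ θ - θ * β' + 0 * Real.log (1 / 2))) :=
        ((hΛ θ).sub_const _).add ((tendsto_inv_atTop_zero.comp ha).mul_const _)
      refine hlim.eventually_const_lt ?_
      have := hlb θ₀ (θ - θ₀)
      rw [add_sub_cancel] at this
      nlinarith
    filter_upwards [d1, d2, d3] with n h1 h2 h3
    have key := tilted_lower (w n) (X n) (hw n) (β * a n) (β' * a n) θ s t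
      (by linarith) hs.le ht.le
    rw [hML, hML, hML] at key
    have key2 : Real.exp (a n * (L n θ - θ * β')) * (1 / 2) ≤
        ∑ A, if β * a n ≤ X n A then w n A else 0 := by
      refine le_trans ?_ key
      have e : Real.exp (-(θ * (β' * a n))) * (Real.exp (a n * L n θ)
          - Real.exp (s * (β * a n)) * Real.exp (a n * L n (θ - s))
          - Real.exp (-(t * (β' * a n))) * Real.exp (a n * L n (θ + t))) =
          Real.exp (a n * (L n θ - θ * β')) *
            (1 - Real.exp (a n * (s * β + L n (θ - s) - L n θ))
              - Real.exp (a n * (-(t * β') + L n (θ + t) - L n θ))) := by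
        simp only [mul_sub, mul_one, ← Real.exp_add]
        ring_nf
      rw [e]
      gcongr
      linarith
    have hpos : 0 < Real.exp (a n * (L n θ - θ * β')) * (1 / 2) := by positivity
    refine ⟨hpos.trans_le key2, h3.trans_le ?_⟩
    have hlog := Real.log_le_log hpos key2
    rw [Real.log_mul (Real.exp_pos _).ne' (by norm_num), Real.log_exp] at hlog
    have := mul_le_mul_of_nonneg_left hlog (inv_nonneg.2 (ha0 n).le)
    rwa [mul_add, inv_mul_cancel_left₀ (ha0 n).ne'] at this
  rw [tendsto_order]
  constructor
  · intro b hb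
    filter_upwards [lower (Λ θ₀ - θ₀ * β - b) (by linarith)] with n hn
    linarith [hn.2]
  · intro b hb
    have h1 : ∀ᶠ n in atTop, L n θ₀ - θ₀ * β < b :=
      ((hΛ θ₀).sub_const _).eventually_lt_const hb
    filter_upwards [h1, lower 1 one_pos] with n hn hpos
    refine lt_of_le_of_lt ?_ hn
    have key := chernoff_upper (w n) (X n) (hw n) (β * a n) θ₀ hθ₀
    rw [hML, ← Real.exp_add] at key
    have hlog := Real.log_le_log hpos.1 key
    rw [Real.log_exp] at hlog
    have := mul_le_mul_of_nonneg_left hlog (inv_nonneg.2 (ha0 n).le)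
    refine this.trans_eq ?_
    field_simp [(ha0 n).ne']
    ring

/-! ### The moment generating function of a degree -/

theorem prod_lt_eq_prod_subtype {N : ℕ} (f : Fin N → Fin N → ℝ) :
    (∏ i : Fin N, ∏ j : Fin N, if i < j then f i j else 1) =
      ∏ e : {e : Fin N × Fin N // e.1 < e.2}, f e.1.1 e.1.2 := by
  rw [← Fintype.prod_prod_type' (f := fun i j => if i < j then f i j else 1),
    ← Finset.prod_filter (fun e : Fin N × Fin N => e.1 < e.2) (fun e => f e.1 e.2)]
  exact Finset.prod_subtype _ (by simp) _

/-- A simple graph on `Fin N` is the free choice of a bit for every pair `i < j`. -/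
def adjMatEquiv (N : ℕ) : AdjMat N ≃ ({e : Fin N × Fin N // e.1 < e.2} → Bool) where
  toFun A e := A.1 e.1.1 e.1.2
  invFun b :=
    ⟨fun i j => if h : i < j then b ⟨(i, j), h⟩ else if h : j < i then b ⟨(j, i), h⟩ else false, by
      constructor
      · intro i j
        rcases lt_trichotomy i j with h | h | h
        · simp [h, h.not_gt]
        · simp [h]
        · simp [h, h.not_gt]
      · intro i; simp⟩
  left_inv A := by
    ext i j
    rcases lt_trichotomy i j with h | h | h
    · simp [h]
    · simp [h, A.2.2]
    · simp [h, h.not_gt, A.2.1 i j]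
  right_inv b := by
    ext ⟨⟨i, j⟩, h⟩
    have h' : i < j := h
    simp [h']

/-- Independence of the edges: a product over pairs `i < j` is summed factor by factor. -/
theorem sum_adjMat_prod {N : ℕ} (g : Fin N → Fin N → Bool → ℝ) :
    (∑ A : AdjMat N, ∏ i : Fin N, ∏ j : Fin N, if i < j then g i j (A.1 i j) else 1) =
      ∏ i : Fin N, ∏ j : Fin N, if i < j then g i j true + g i j false else 1 := by
  rw [prod_lt_eq_prod_subtype]
  have h : ∀ e : {e : Fin N × Fin N // e.1 < e.2},
      g e.1.1 e.1.2 true + g e.1.1 e.1.2 false = ∑ b : Bool, g e.1.1 e.1.2 b := by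
    intro e; simp
  simp_rw [h, Finset.prod_univ_sum, Fintype.piFinset_univ]
  refine Fintype.sum_equiv (adjMatEquiv N) _ _ fun A => ?_
  exact prod_lt_eq_prod_subtype fun i j => g i j (A.1 i j)

/-- Only the pairs containing `i` contribute; they form the star `{i, j}`, `j ≠ i`. -/
theorem prod_star {N : ℕ} (i : Fin N) (f : Fin N → Fin N → ℝ) (hf : ∀ a b, f a b = f b a) :
    (∏ a : Fin N, ∏ b : Fin N, if a < b then (if a = i ∨ b = i then f a b else 1) else 1) =
      ∏ j : Fin N, if j = i then 1 else f i j := by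
  have h : ∀ a : Fin N, (∏ b : Fin N, if a < b then (if a = i ∨ b = i then f a b else 1) else 1) =
      (if a = i then ∏ b : Fin N, (if i < b then f i b else 1) else 1) *
        (if a < i then f i a else 1) := by
    intro a
    by_cases ha : a = i
    · subst ha; simp
    · simp only [ha, false_or, if_false, one_mul]
      rw [Finset.prod_eq_single i]
      · simp [hf a i]
      · intro b _ hb; simp [hb]
      · simp
  simp_rw [h, Finset.prod_mul_distrib]
  rw [Finset.prod_ite_eq' Finset.univ i, if_pos (Finset.mem_univ i), ← Finset.prod_mul_distrib]
  refine Finset.prod_congr rfl fun j _ => ?_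
  rcases lt_trichotomy j i with h | h | h
  · simp [h, h.ne, h.not_gt]
  · simp [h]
  · simp [h, h.ne', h.not_gt]

/-- The factor `p e^θ + 1 - p`: moment generating function of a Bernoulli variable. -/
def bernMgf (θ p : ℝ) : ℝ := p * Real.exp θ + 1 - p

/-- The moment generating function of the degree of vertex `i`. -/
theorem errg_degree_mgf {N : ℕ} (p : Fin N → Fin N → ℝ) (hp : ∀ a b, p a b = p b a) (i : Fin N)
    (θ : ℝ) :
    (∑ A : AdjMat N, errgWeight N p A * Real.exp (θ * degRG A i)) =
      ∏ j : Fin N, if j = i then 1 else bernMgf θ (p i j) := by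
  have h1 : ∀ A : AdjMat N, errgWeight N p A * Real.exp (θ * degRG A i) =
      ∏ a : Fin N, ∏ b : Fin N, if a < b then
        (if A.1 a b then p a b else 1 - p a b) *
          (if a = i ∨ b = i then (if A.1 a b then Real.exp θ else 1) else 1) else 1 := by
    intro A
    have h2 : Real.exp (θ * degRG A i) =
        ∏ j : Fin N, if j = i then 1 else (if A.1 i j then Real.exp θ else 1) := by
      rw [degRG, Finset.mul_sum, Real.exp_sum]
      refine Finset.prod_congr rfl fun j _ => ?_
      by_cases hj : j = i
      · subst hj; simp [A.2.2]
      · by_cases hA : A.1 i j = true <;> simp [hj, hA]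
    rw [h2, ← prod_star i (fun a b => if A.1 a b then Real.exp θ else 1)
      (fun a b => by simp only [A.2.1 a b]), errgWeight, ← Finset.prod_mul_distrib]
    refine Finset.prod_congr rfl fun a _ => ?_
    rw [← Finset.prod_mul_distrib]
    refine Finset.prod_congr rfl fun b _ => ?_
    split_ifs <;> simp
  simp_rw [h1]
  rw [sum_adjMat_prod (fun a b c => (if c then p a b else 1 - p a b) *
          (if a = i ∨ b = i then (if c then Real.exp θ else 1) else 1)),
    ← prod_star i (fun a b => bernMgf θ (p a b)) (fun a b => by simp only [hp a b])]
  refine Finset.prod_congr rfl fun a _ => Finset.prod_congr rfl fun b _ => ?_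
  split_ifs <;> simp_all [bernMgf]
  ring

/-! ### Blocks of the unit interval -/

theorem existsUnique_blk (n : ℕ) (x : ℝ) (hx : x ∈ Set.Ico (0:ℝ) 1) :
    ∃! i : Fin (n + 1), x ∈ blk (n + 1) i := by
  have hN : (0:ℝ) < ((n + 1 : ℕ) : ℝ) := by positivity
  have hiff : ∀ i : Fin (n + 1),
      x ∈ blk (n + 1) i ↔ ⌊x * ((n + 1 : ℕ) : ℝ)⌋₊ = (i : ℕ) := by
    intro i
    rw [blk, Set.mem_Ico, div_le_iff₀ hN, lt_div_iff₀ hN,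
      Nat.floor_eq_iff (mul_nonneg hx.1 hN.le)]
  have hlt : ⌊x * ((n + 1 : ℕ) : ℝ)⌋₊ < n + 1 := by
    rw [Nat.floor_lt (mul_nonneg hx.1 hN.le)]
    nlinarith [hx.2]
  refine ⟨⟨_, hlt⟩, (hiff _).2 rfl, fun j hj => Fin.ext ((hiff j).1 hj).symm⟩

theorem left_mem_blk (n : ℕ) (i : Fin (n + 1)) :
    ((i : ℕ) : ℝ) / ((n + 1 : ℕ) : ℝ) ∈ blk (n + 1) i := by
  have hN : (0:ℝ) < ((n + 1 : ℕ) : ℝ) := by positivity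
  refine ⟨le_rfl, ?_⟩
  rw [div_lt_div_iff_of_pos_right hN]; linarith

/-- The integral over `[0,1]` of a function that is constant on each block is the average of
its block values; only the null point `1` lies outside the blocks. -/
theorem integral_blockwise (n : ℕ) (g : ℝ → ℝ) (c : Fin (n + 1) → ℝ)
    (hg : ∀ j, ∀ y ∈ blk (n + 1) j, g y = c j) :
    ∫ y in UI, g y = ((n + 1 : ℕ) : ℝ)⁻¹ * ∑ j, c j := by
  have hN : (0:ℝ) < ((n + 1 : ℕ) : ℝ) := by positivity
  have hU : (⋃ j : Fin (n + 1), blk (n + 1) j) = Set.Ico 0 1 := by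
    ext y
    rw [Set.mem_iUnion]
    constructor
    · rintro ⟨j, h1, h2⟩
      refine ⟨le_trans (by positivity) h1, h2.trans_le ?_⟩
      rw [div_le_one hN]
      exact_mod_cast j.2
    · intro hy; exact (existsUnique_blk n y hy).exists
  have hmeas : ∀ j : Fin (n + 1), MeasurableSet (blk (n + 1) j) := fun j => measurableSet_Ico
  have hdisj : Pairwise (Function.onFun Disjoint (blk (n + 1))) := by
    intro i j hij
    refine Set.disjoint_left.2 fun y hi hj => hij ?_
    have hy : y ∈ Set.Ico (0:ℝ) 1 := hU ▸ Set.mem_iUnion_of_mem i hi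
    exact (existsUnique_blk n y hy).unique hi hj
  have hvol : ∀ j : Fin (n + 1), volume (blk (n + 1) j) =
      ENNReal.ofReal (((n + 1 : ℕ) : ℝ)⁻¹) := by
    intro j; rw [blk, Real.volume_Ico]; congr 1; field_simp; ring
  rw [UI, ← setIntegral_congr_set (Ico_ae_eq_Icc (μ := volume) (a := (0:ℝ)) (b := 1)), ← hU,
    integral_iUnion_fintype hmeas hdisj, Finset.mul_sum]
  · refine Finset.sum_congr rfl fun j _ => ?_
    rw [setIntegral_congr_fun (hmeas j) (hg j), setIntegral_const, Measure.real, hvol,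
      ENNReal.toReal_ofReal (by positivity), smul_eq_mul]
  · intro j
    refine IntegrableOn.congr_fun (f := fun _ => c j) ?_ (fun y hy => (hg j y hy).symm) (hmeas j)
    exact integrableOn_const (by rw [hvol]; exact ENNReal.ofReal_ne_top)

/-! ### Tilted Bernoulli variables -/

theorem bernMgf_pos {p : ℝ} (hp : p ∈ Set.Icc (0:ℝ) 1) (θ : ℝ) : 0 < bernMgf θ p := by
  unfold bernMgf
  have := Real.exp_pos θ
  rcases hp.1.eq_or_lt with h | h
  · rw [← h]; norm_num
  · nlinarith [hp.2, mul_pos h this]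

theorem abs_log_bernMgf_le {p : ℝ} (hp : p ∈ Set.Icc (0:ℝ) 1) (θ : ℝ) :
    |Real.log (bernMgf θ p)| ≤ |θ| := by
  have h1 : bernMgf θ p ≤ Real.exp |θ| := by
    have a := Real.exp_le_exp.2 (le_abs_self θ)
    have b := Real.one_le_exp (abs_nonneg θ)
    unfold bernMgf; nlinarith [hp.1, hp.2]
  have h2 : Real.exp (-|θ|) ≤ bernMgf θ p := by
    have a := Real.exp_le_exp.2 (neg_abs_le θ)
    have b := Real.exp_le_one_iff.2 (neg_nonpos.2 (abs_nonneg θ))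
    unfold bernMgf; nlinarith [hp.1, hp.2]
  rw [abs_le]
  exact ⟨(Real.le_log_iff_exp_le (bernMgf_pos hp θ)).2 h2,
    (Real.log_le_iff_le_exp (bernMgf_pos hp θ)).2 h1⟩

/-- The `θ`-tilted Bernoulli parameter. -/
def bernTilt (θ p : ℝ) : ℝ := p * Real.exp θ / bernMgf θ p

theorem bernTilt_mem {p : ℝ} (hp : p ∈ Set.Icc (0:ℝ) 1) (θ : ℝ) :
    bernTilt θ p ∈ Set.Icc (0:ℝ) 1 := by
  have h := bernMgf_pos hp θ
  refine ⟨div_nonneg (mul_nonneg hp.1 (Real.exp_pos θ).le) h.le, ?_⟩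
  rw [bernTilt, div_le_one h, bernMgf]; linarith [hp.2]

/-- Tilting by `θ` and then by `s` amounts to tilting by `θ + s`. -/
theorem bernMgf_add {p : ℝ} (hp : p ∈ Set.Icc (0:ℝ) 1) (θ s : ℝ) :
    bernMgf (θ + s) p = bernMgf θ p * bernMgf s (bernTilt θ p) := by
  have h := (bernMgf_pos hp θ).ne'
  have e : bernMgf θ p * bernTilt θ p = p * Real.exp θ := by rw [bernTilt]; field_simp
  have : bernMgf θ p * bernMgf s (bernTilt θ p) =
      (bernMgf θ p * bernTilt θ p) * (Real.exp s - 1) + bernMgf θ p := by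
    simp only [bernMgf]; ring
  rw [this, e, bernMgf, bernMgf, Real.exp_add]; ring

theorem log_bernMgf_add {p : ℝ} (hp : p ∈ Set.Icc (0:ℝ) 1) (θ s : ℝ) :
    Real.log (bernMgf (θ + s) p) - Real.log (bernMgf θ p) =
      Real.log (bernMgf s (bernTilt θ p)) := by
  rw [bernMgf_add hp, Real.log_mul (bernMgf_pos hp θ).ne'
    (bernMgf_pos (bernTilt_mem hp θ) s).ne']; ring

theorem log_bernMgf_le {p : ℝ} (hp : p ∈ Set.Icc (0:ℝ) 1) (s : ℝ) :
    Real.log (bernMgf s p) ≤ p * (Real.exp s - 1) := by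
  refine (Real.log_le_sub_one_of_pos (bernMgf_pos hp s)).trans_eq ?_
  rw [bernMgf]; ring

theorem le_log_bernMgf {p : ℝ} (hp : p ∈ Set.Icc (0:ℝ) 1) (s : ℝ) :
    p * s ≤ Real.log (bernMgf s p) := by
  rw [Real.le_log_iff_exp_le (bernMgf_pos hp s)]
  -- Jensen's inequality for `exp` at the points `s` and `0`.
  have := convexOn_exp.2 (Set.mem_univ s) (Set.mem_univ 0) hp.1 (sub_nonneg.2 hp.2) (by ring)
  simp only [smul_eq_mul, mul_zero, add_zero, Real.exp_zero, mul_one] at this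
  rw [bernMgf]; linarith

/-- The tilted parameter increases at a rate that is uniform over `p ∈ [rm, rp]`. -/
theorem bernTilt_add_le {p rm rp θ θ' : ℝ} (h0 : 0 < rm) (hm : rm ≤ p) (hp : p ≤ rp) (h1 : rp < 1)
    (h : θ < θ') :
    bernTilt θ p + rm * (1 - rp) * (Real.exp θ' - Real.exp θ) / (Real.exp θ' + 1) ^ 2 ≤
      bernTilt θ' p := by
  have hpI : p ∈ Set.Icc (0:ℝ) 1 := ⟨by linarith, by linarith⟩
  have a := bernMgf_pos hpI θ
  have b := bernMgf_pos hpI θ'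
  have e := Real.exp_lt_exp.2 h
  have ep := Real.exp_pos θ
  have hd : bernTilt θ' p - bernTilt θ p =
      p * (1 - p) * (Real.exp θ' - Real.exp θ) / (bernMgf θ' p * bernMgf θ p) := by
    rw [bernTilt, bernTilt, div_sub_div _ _ b.ne' a.ne']
    congr 1
    simp only [bernMgf]; ring
  have a' : bernMgf θ p ≤ Real.exp θ' + 1 := by
    unfold bernMgf; nlinarith
  have b' : bernMgf θ' p ≤ Real.exp θ' + 1 := by
    unfold bernMgf; nlinarith
  have key : rm * (1 - rp) * (Real.exp θ' - Real.exp θ) / (Real.exp θ' + 1) ^ 2 ≤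
      p * (1 - p) * (Real.exp θ' - Real.exp θ) / (bernMgf θ' p * bernMgf θ p) := by
    rw [sq]
    have : 0 < 1 - rp := by linarith
    have : 0 < Real.exp θ' - Real.exp θ := by linarith
    have : 0 ≤ 1 - p := by linarith
    have : 0 ≤ p := hpI.1
    gcongr
  linarith

theorem one_sub_bernTilt_le {p rm : ℝ} (h0 : 0 < rm) (hm : rm ≤ p) (hp : p ≤ 1) (θ : ℝ) :
    1 - Real.exp (-θ) / rm ≤ bernTilt θ p := by
  have hpI : p ∈ Set.Icc (0:ℝ) 1 := ⟨by linarith, hp⟩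
  have a := bernMgf_pos hpI θ
  have ep := Real.exp_pos θ
  have : 1 - bernTilt θ p = (1 - p) / bernMgf θ p := by
    rw [bernTilt, eq_div_iff a.ne', sub_mul, div_mul_cancel₀ _ a.ne', bernMgf]; ring
  have h2 : (1 - p) / bernMgf θ p ≤ 1 / (Real.exp θ * rm) := by
    have : Real.exp θ * rm ≤ bernMgf θ p := by unfold bernMgf; nlinarith
    gcongr
    linarith
  have h3 : Real.exp (-θ) / rm = 1 / (Real.exp θ * rm) := by
    rw [Real.exp_neg]; field_simp
  linarith

/-! ### The cumulant generating function of a graphon -/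

/-- The tilted mean degree `∫ bernTilt θ (r x y) dy`, the derivative of `Lam r x` at `θ`. -/
def meanTilt (r : ℝ → ℝ → ℝ) (x θ : ℝ) : ℝ := ∫ y in UI, bernTilt θ (r x y)

instance : IsProbabilityMeasure (volume.restrict UI) := ⟨by simp [UI]⟩

theorem integrable_UI_of_bound {f : ℝ → ℝ} (hf : Measurable f) (C : ℝ) (hC : ∀ y, |f y| ≤ C) :
    Integrable f (volume.restrict UI) :=
  Integrable.of_bound hf.aestronglyMeasurable C (ae_of_all _ hC)

theorem measurable_section {r : ℝ → ℝ → ℝ} (hr : IsGraphon r) (x : ℝ) :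
    Measurable fun y => r x y := hr.2.1.of_uncurry_left

theorem integrable_log_bernMgf {r : ℝ → ℝ → ℝ} (hr : IsGraphon r) (x θ : ℝ) :
    Integrable (fun y => Real.log (bernMgf θ (r x y))) (volume.restrict UI) := by
  have := measurable_section hr x
  refine integrable_UI_of_bound ?_ |θ| fun y => abs_log_bernMgf_le (hr.2.2 x y) θ
  unfold bernMgf; fun_prop

theorem measurable_bernTilt {r : ℝ → ℝ → ℝ} (hr : IsGraphon r) (x θ : ℝ) :
    Measurable fun y => bernTilt θ (r x y) := by
  have := measurable_section hr x
  unfold bernTilt bernMgf; fun_prop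

theorem abs_bernTilt_le_one {r : ℝ → ℝ → ℝ} (hr : IsGraphon r) (x θ y : ℝ) :
    |bernTilt θ (r x y)| ≤ 1 := by
  have := bernTilt_mem (hr.2.2 x y) θ
  rw [abs_of_nonneg this.1]; exact this.2

theorem integrable_bernTilt {r : ℝ → ℝ → ℝ} (hr : IsGraphon r) (x θ : ℝ) :
    Integrable (fun y => bernTilt θ (r x y)) (volume.restrict UI) :=
  integrable_UI_of_bound (measurable_bernTilt hr x θ) 1 (abs_bernTilt_le_one hr x θ)

theorem Lam_add_sub {r : ℝ → ℝ → ℝ} (hr : IsGraphon r) (x θ s : ℝ) :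
    Lam r x (θ + s) - Lam r x θ =
      ∫ y in UI, Real.log (bernMgf s (bernTilt θ (r x y))) := by
  simp_rw [← log_bernMgf_add (hr.2.2 x _)]
  exact (integral_sub (integrable_log_bernMgf hr x (θ + s)) (integrable_log_bernMgf hr x θ)).symm

theorem integrable_log_bernMgf_bernTilt {r : ℝ → ℝ → ℝ} (hr : IsGraphon r) (x θ s : ℝ) :
    Integrable (fun y => Real.log (bernMgf s (bernTilt θ (r x y)))) (volume.restrict UI) := by
  simp_rw [← log_bernMgf_add (hr.2.2 x _)]
  exact (integrable_log_bernMgf hr x (θ + s)).sub (integrable_log_bernMgf hr x θ)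

theorem Lam_add_sub_le {r : ℝ → ℝ → ℝ} (hr : IsGraphon r) (x θ s : ℝ) :
    Lam r x (θ + s) - Lam r x θ ≤ meanTilt r x θ * (Real.exp s - 1) := by
  rw [Lam_add_sub hr, meanTilt, ← integral_mul_const]
  exact integral_mono (integrable_log_bernMgf_bernTilt hr x θ s)
    ((integrable_bernTilt hr x θ).mul_const _)
    fun y => log_bernMgf_le (bernTilt_mem (hr.2.2 x y) θ) s

theorem le_Lam_add_sub {r : ℝ → ℝ → ℝ} (hr : IsGraphon r) (x θ s : ℝ) :
    meanTilt r x θ * s ≤ Lam r x (θ + s) - Lam r x θ := by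
  rw [Lam_add_sub hr, meanTilt, ← integral_mul_const]
  exact integral_mono ((integrable_bernTilt hr x θ).mul_const _)
    (integrable_log_bernMgf_bernTilt hr x θ s)
    fun y => le_log_bernMgf (bernTilt_mem (hr.2.2 x y) θ) s

theorem continuous_meanTilt {r : ℝ → ℝ → ℝ} (hr : IsGraphon r) (x : ℝ) :
    Continuous (meanTilt r x) := by
  refine continuous_of_dominated (bound := fun _ => 1)
    (fun θ => (measurable_bernTilt hr x θ).aestronglyMeasurable)
    (fun θ => ae_of_all _ (abs_bernTilt_le_one hr x θ)) (integrable_const _)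
    (ae_of_all _ fun y => ?_)
  have h := fun θ => (bernMgf_pos (hr.2.2 x y) θ).ne'
  unfold bernTilt
  refine Continuous.div (by fun_prop) ?_ h
  unfold bernMgf; fun_prop

theorem meanTilt_zero (r : ℝ → ℝ → ℝ) (x : ℝ) : meanTilt r x 0 = degFun r x := by
  simp [meanTilt, degFun, bernTilt, bernMgf]

theorem strictMono_meanTilt {r : ℝ → ℝ → ℝ} {rm rp : ℝ} (hb : BoundedGraphon r rm rp) {x : ℝ}
    (hx : x ∈ UI) : StrictMono (meanTilt r x) := by
  obtain ⟨hr, h0, -, h1, hbd⟩ := hb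
  intro θ θ' h
  set c := rm * (1 - rp) * (Real.exp θ' - Real.exp θ) / (Real.exp θ' + 1) ^ 2 with hc
  have hcpos : 0 < c := by
    have := Real.exp_lt_exp.2 h
    have a : 0 < 1 - rp := by linarith
    have b : 0 < Real.exp θ' - Real.exp θ := by linarith
    have := Real.exp_pos θ'
    positivity
  have key : ∫ y in UI, (bernTilt θ (r x y) + c) ≤ meanTilt r x θ' :=
    setIntegral_mono_on ((integrable_bernTilt hr x θ).add (integrable_const c))
      (integrable_bernTilt hr x θ') measurableSet_Icc fun y hy =>
        bernTilt_add_le h0 (hbd x hx y hy).1 (hbd x hx y hy).2 h1 h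
  rw [integral_add (integrable_bernTilt hr x θ) (integrable_const c)] at key
  simp only [integral_const, probReal_univ, one_smul] at key
  have : meanTilt r x θ = ∫ y in UI, bernTilt θ (r x y) := rfl
  linarith

/-- The tilted mean degree runs continuously from `degFun r x` at `θ = 0` up to `1` as `θ → ∞`. -/
theorem exists_meanTilt_eq {r : ℝ → ℝ → ℝ} {rm rp : ℝ} (hb : BoundedGraphon r rm rp) {x : ℝ}
    (hx : x ∈ UI) {β : ℝ} (hβ : β ∈ Set.Ioo (degFun r x) 1) :
    ∃ θ, 0 ≤ θ ∧ meanTilt r x θ = β := by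
  have hmono := strictMono_meanTilt hb hx
  obtain ⟨hr, h0, -, h1, hbd⟩ := hb
  have hlim : Tendsto (fun θ : ℝ => 1 - Real.exp (-θ) / rm) atTop (nhds (1 - 0 / rm)) :=
    ((Real.tendsto_exp_neg_atTop_nhds_zero).div_const rm).const_sub 1
  obtain ⟨θ₁, hθ₁⟩ := (hlim.eventually_const_lt (u := β) (by simpa using hβ.2)).exists
  have hge : β ≤ meanTilt r x θ₁ := by
    refine hθ₁.le.trans ?_
    have key : ∫ _ in UI, (1 - Real.exp (-θ₁) / rm) ≤ meanTilt r x θ₁ :=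
      setIntegral_mono_on (integrable_const _) (integrable_bernTilt hr x θ₁) measurableSet_Icc
        fun y hy => one_sub_bernTilt_le h0 (hbd x hx y hy).1 (hr.2.2 x y).2 θ₁
    simpa using key
  have hle : meanTilt r x 0 ≤ β := by rw [meanTilt_zero]; exact hβ.1.le
  obtain ⟨θ, hθ⟩ := mem_range_of_exists_le_of_exists_ge (continuous_meanTilt hr x)
    ⟨0, hle⟩ ⟨θ₁, hge⟩
  exact ⟨θ, hmono.le_iff_le.1 (by rw [hθ]; exact hle), hθ⟩

/-- The supremum defining `J_r(x,β)` is attained where the tilted mean degree equals `β`. -/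
theorem Jfun_eq {r : ℝ → ℝ → ℝ} (hr : IsGraphon r) (x θ₀ : ℝ) :
    Jfun r x (meanTilt r x θ₀) = θ₀ * meanTilt r x θ₀ - Lam r x θ₀ := by
  have h : ∀ θ, θ * meanTilt r x θ₀ - Lam r x θ ≤ θ₀ * meanTilt r x θ₀ - Lam r x θ₀ := by
    intro θ
    have := le_Lam_add_sub hr x θ₀ (θ - θ₀)
    rw [add_sub_cancel] at this
    linarith
  exact le_antisymm (ciSup_le h)
    (le_ciSup (f := fun θ => θ * meanTilt r x θ₀ - Lam r x θ)
      ⟨_, Set.forall_mem_range.2 h⟩ θ₀)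

theorem tendsto_Lam {r : ℝ → ℝ → ℝ} {rN : ℕ → ℝ → ℝ → ℝ} (hr : IsGraphon r)
    (hg : ∀ N, IsGraphon (rN N)) (hpt : PtConv r rN) {x : ℝ} (hx : x ∈ UI) (θ : ℝ) :
    Tendsto (fun N => Lam (rN N) x θ) atTop (nhds (Lam r x θ)) := by
  refine tendsto_integral_of_dominated_convergence (fun _ => |θ|)
    (fun N => (integrable_log_bernMgf (hg N) x θ).aestronglyMeasurable) (integrable_const _)
    (fun N => ae_of_all _ fun y => abs_log_bernMgf_le ((hg N).2.2 x y) θ) ?_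
  refine (ae_restrict_iff' measurableSet_Icc).2 (ae_of_all _ fun y hy => ?_)
  refine Tendsto.log ?_ (bernMgf_pos (hr.2.2 x y) θ).ne'
  have h := hpt x hx y hy
  exact ((h.mul_const _).add_const 1).sub h

/-! ### Degrees in the random graph -/

/-- The normalised log moment generating function of the degree is `Lam (r_N) x θ` up to the
missing diagonal term, which is of order `1/N`. -/
theorem abs_log_mgf_sub_Lam_le {f : ℝ → ℝ → ℝ} (n : ℕ) (hf : IsGraphon f)
    (hblk : IsBlockGraphon (n + 1) f) {x : ℝ} (i : Fin (n + 1)) (hi : x ∈ blk (n + 1) i) (θ : ℝ) :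
    |((n + 1 : ℕ) : ℝ)⁻¹ * Real.log (∑ A : AdjMat (n + 1),
        errgWeight (n + 1) (pOf (n + 1) f) A * Real.exp (θ * degRG A i)) - Lam f x θ| ≤
      ((n + 1 : ℕ) : ℝ)⁻¹ * |θ| := by
  have hmem : ∀ j, pOf (n + 1) f i j ∈ Set.Icc (0:ℝ) 1 := fun j => hf.2.2 _ _
  have hL : Lam f x θ =
      ((n + 1 : ℕ) : ℝ)⁻¹ * ∑ j, Real.log (bernMgf θ (pOf (n + 1) f i j)) := by
    refine integral_blockwise n _ _ fun j y hy => ?_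
    have : f x y = pOf (n + 1) f i j :=
      hblk i j x hi _ (left_mem_blk n i) y hy _ (left_mem_blk n j)
    rw [this, bernMgf]
  have hsymm : ∀ a b, pOf (n + 1) f a b = pOf (n + 1) f b a := fun a b => hf.1 _ _
  rw [errg_degree_mgf _ hsymm, hL, Real.log_prod, ← mul_sub,
    ← Finset.sum_sub_distrib]
  · have h2 : ∀ j, Real.log (if j = i then 1 else bernMgf θ (pOf (n + 1) f i j)) -
        Real.log (bernMgf θ (pOf (n + 1) f i j)) =
        if j = i then -Real.log (bernMgf θ (pOf (n + 1) f i j)) else 0 := by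
      intro j; split_ifs <;> simp
    simp_rw [h2]
    rw [Finset.sum_ite_eq' Finset.univ i, if_pos (Finset.mem_univ i), abs_mul, abs_neg,
      abs_of_nonneg (a := ((n + 1 : ℕ) : ℝ)⁻¹) (by positivity)]
    exact mul_le_mul_of_nonneg_left (abs_log_bernMgf_le (hmem i) θ) (by positivity)
  · intro j _
    split_ifs
    · exact one_ne_zero
    · exact (bernMgf_pos (hmem j) θ).ne'

theorem errgWeight_nonneg {N : ℕ} {p : Fin N → Fin N → ℝ} (hp : ∀ i j, p i j ∈ Set.Icc (0:ℝ) 1)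
    (A : AdjMat N) : 0 ≤ errgWeight N p A := by
  refine Finset.prod_nonneg fun i _ => Finset.prod_nonneg fun j _ => ?_
  split_ifs
  · exact (hp i j).1
  · linarith [(hp i j).2]
  · exact zero_le_one

/-- **Upward LDP for the degree of a single vertex with label `≈ xN`.** -/
theorem single_degree_LDP
    (r : ℝ → ℝ → ℝ) (rm rp : ℝ) (hb : BoundedGraphon r rm rp)
    (rN : ℕ → ℝ → ℝ → ℝ) (hg : ∀ N, IsGraphon (rN N))
    (hblk : ∀ N, IsBlockGraphon N (rN N))
    (hval : ∀ N, ∀ x ∈ UI, ∀ y ∈ UI, rN N x y ∈ Set.Ioo (0:ℝ) 1)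
    (hpt : PtConv r rN) (hsup : SupConv r rN)
    (x : ℝ) (hx : x ∈ Set.Ico (0:ℝ) 1)
    (β : ℝ) (hβ : β ∈ Set.Ioo (degFun r x) 1) :
    Tendsto (fun N : ℕ =>
        (N : ℝ)⁻¹ *
          Real.log (errgProb N (pOf N (rN N))
            {A : AdjMat N | ∃ i : Fin N, x ∈ blk N i ∧ β ≤ degRG A i / (N : ℝ)}))
      atTop (nhds (-(Jfun r x β))) := by
  have hxU : x ∈ UI := Set.Ico_subset_Icc_self hx
  have hr := hb.1
  obtain ⟨θ₀, hθ₀, rfl⟩ := exists_meanTilt_eq hb hxU hβ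
  rw [Jfun_eq hr, neg_sub]
  -- Passing to `N = n + 1` removes the vertexless graph.
  rw [← tendsto_add_atTop_iff_nat 1]
  choose ix hix hixu using fun n => existsUnique_blk n x hx
  have hN : ∀ n : ℕ, (0:ℝ) < ((n + 1 : ℕ) : ℝ) := fun n => by positivity
  have ha : Tendsto (fun n : ℕ => ((n + 1 : ℕ) : ℝ)) atTop atTop :=
    tendsto_natCast_atTop_atTop.comp (tendsto_add_atTop_nat 1)
  have hp : ∀ n (i j : Fin (n + 1)), pOf (n + 1) (rN (n + 1)) i j ∈ Set.Icc (0:ℝ) 1 :=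
    fun n i j => (hg (n + 1)).2.2 _ _
  have key := gartner_ellis_upper_tail (Ω := fun n => AdjMat (n + 1))
    (fun n A => errgWeight (n + 1) (pOf (n + 1) (rN (n + 1))) A) (fun n A => degRG A (ix n))
    (fun n A => errgWeight_nonneg (hp n) A) (fun n => ((n + 1 : ℕ) : ℝ)) hN ha
    (Lam r x) (meanTilt r x) ?_ ?_ (Lam_add_sub_le hr x) (le_Lam_add_sub hr x)
    (continuous_meanTilt hr x) (strictMono_meanTilt hb hxU) θ₀ hθ₀
  · refine key.congr fun n => ?_
    congr 2
    refine Finset.sum_congr rfl fun A _ => ?_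
    have hiff : A ∈ {A : AdjMat (n + 1) | ∃ i : Fin (n + 1), x ∈ blk (n + 1) i ∧
        meanTilt r x θ₀ ≤ degRG A i / ((n + 1 : ℕ) : ℝ)} ↔
        meanTilt r x θ₀ * ((n + 1 : ℕ) : ℝ) ≤ degRG A (ix n) := by
      rw [← le_div_iff₀ (hN n)]
      constructor
      · rintro ⟨i, hi, h⟩
        rwa [hixu n i hi] at h
      · intro h
        exact ⟨ix n, hix n, h⟩
    simp only [hiff]
  · intro n θ
    have hsymm : ∀ a b, pOf (n + 1) (rN (n + 1)) a b = pOf (n + 1) (rN (n + 1)) b a :=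
      fun a b => (hg (n + 1)).1 _ _
    simp only [errg_degree_mgf _ hsymm]
    refine Finset.prod_pos fun j _ => ?_
    split_ifs
    · exact one_pos
    · exact bernMgf_pos (hp n _ _) θ
  · intro θ
    have h1 : Tendsto (fun n => Lam (rN (n + 1)) x θ) atTop (nhds (Lam r x θ)) :=
      (tendsto_Lam hr hg hpt hxU θ).comp (tendsto_add_atTop_nat 1)
    have h2 : Tendsto (fun n : ℕ => ((n + 1 : ℕ) : ℝ)⁻¹ * |θ|) atTop (nhds 0) := by
      simpa using (tendsto_inv_atTop_zero.comp ha).mul_const |θ|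
    have h3 := squeeze_zero_norm (fun n => (Real.norm_eq_abs _).trans_le
      (abs_log_mgf_sub_Lam_le n (hg (n + 1)) (hblk (n + 1)) (ix n) (hix n) θ)) h2
    simpa using h3.add h1
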